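/- (Mode-tracking equation, general form.) Let D be a positive natural number, α, σ : ℝ → ℝ smooth with α(t) > 0 and σ(t) > 0 for all t, λ(t) = log(α(t)²/σ(t)²), f(t) = (d/dt) log α(t), g(t)² = -λ'(t)·σ(t)². Let p : ℝ → ℝ^D → ℝ be smooth and everywhere positive, satisfying the linear-drift Fokker–Planck equation ∂_t p(t,x) = -div_x(f(t)·x·p(t,x)) + (1/2)·g(t)²·Δ_x p(t,x) for all t and x. Fix t > 0 and x_t ∈ ℝ^D, and for s ∈ (0, t) set f̃(s) = α(t)/α(s), g̃²(s) = σ(t)² - f̃(s)²·σ(s)², ψ(s) = f̃(s)²/g̃²(s); assume g̃²(s) > 0 for all s ∈ (0, t). Let y : (0, t) → ℝ^D be a differentiable curve such that for every s ∈ (0, t), y(s) is a critical point of the conditional log-density, i.e. ∇_x log p(s, y(s)) + (f̃(s)/g̃²(s))·(x_t - f̃(s)·y(s)) = 0. Then for all s ∈ (0, t): (Hess_x log p(s, y(s)) - ψ(s)·Id) applied to (y'(s) - f(s)·y(s) + g(s)²·∇_x log p(s, y(s))) equals -(1/2)·g(s)²·∇_x(Δ_x log p)(s, y(s)). -/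

import Mathlib

open scoped BigOperators RealInnerProductSpace
open MeasureTheory

/-- Divergence of a vector field on `EuclideanSpace ℝ (Fin D)`. -/
noncomputable def divg {D : ℕ} (F : EuclideanSpace ℝ (Fin D) → EuclideanSpace ℝ (Fin D))
    (x : EuclideanSpace ℝ (Fin D)) : ℝ :=
  ∑ i, fderiv ℝ F x (EuclideanSpace.single i 1) i

/-- Laplacian of a scalar field on `EuclideanSpace ℝ (Fin D)`. -/
noncomputable def lap {D : ℕ} (f : EuclideanSpace ℝ (Fin D) → ℝ)
    (x : EuclideanSpace ℝ (Fin D)) : ℝ :=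
  divg (gradient f) x

/-! The score of the posterior, `∇ log p(s, ·) + ∇ log p(x_t | ·)`, vanishes along `s ↦ y s`.
Differentiate this identity in `s`. Mixed partial derivatives commute, so the partial
`s`-derivative of `∇ log p` is `∇ ∂ₛ log p`, and the Fokker–Planck equation divided by `p` reads
`∂ₛ log p = -f (D + ⟪∇ log p, x⟫) + (g² / 2) (Δ log p + ‖∇ log p‖²)`, whose gradient is computed
from the symmetry of the Hessian. The score of the Gaussian kernel `p(x_t | ·)` is differentiated
using `f̃' = -f f̃` and `(g̃²)' = -f̃² g²`, and the critical-point equation eliminates `x_t`. -/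

open InnerProductSpace Filter Topology Function

section MixedPartials

variable {E F : Type*} [NormedAddCommGroup E] [NormedSpace ℝ E] [NormedAddCommGroup F]
  [NormedSpace ℝ F] {L : ℝ → E → F} {s : ℝ} {x : E}

theorem fderiv_eq_fderiv_uncurry_comp_inr (hL : DifferentiableAt ℝ (uncurry L) (s, x)) :
    fderiv ℝ (L s) x = (fderiv ℝ (uncurry L) (s, x)).comp (.inr ℝ ℝ E) :=
  (hL.hasFDerivAt.comp x (hasFDerivAt_prodMk_right s x)).fderiv

theorem deriv_eq_fderiv_uncurry_apply (hL : DifferentiableAt ℝ (uncurry L) (s, x)) :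
    deriv (fun τ => L τ x) s = fderiv ℝ (uncurry L) (s, x) (1, 0) :=
  (hL.hasFDerivAt.comp_hasDerivAt (f := fun τ => (τ, x)) s
    ((hasDerivAt_id s).prodMk (hasDerivAt_const s x))).deriv

theorem hasDerivAt_fderiv_of_contDiffAt_uncurry (hL : ContDiffAt ℝ 2 (uncurry L) (s, x)) :
    HasDerivAt (fun τ => fderiv ℝ (L τ) x) (fderiv ℝ (fun z => deriv (fun τ => L τ z) s) x) s := by
  have hdiff : ∀ᶠ q in 𝓝 (s, x), DifferentiableAt ℝ (uncurry L) q :=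
    (hL.eventually (by simp)).mono fun _ h => h.differentiableAt (by simp)
  have hfderiv :
      HasFDerivAt (fderiv ℝ (uncurry L)) (fderiv ℝ (fderiv ℝ (uncurry L)) (s, x)) (s, x) :=
    ((hL.fderiv_right (m := 1) (by norm_num)).differentiableAt (by simp)).hasFDerivAt
  have hmixed : fderiv ℝ (fun z => deriv (fun τ => L τ z) s) x =
      (fderiv ℝ (fderiv ℝ (uncurry L)) (s, x) (1, 0)).comp (.inr ℝ ℝ E) := by
    have hnear : ∀ᶠ z in 𝓝 x, DifferentiableAt ℝ (uncurry L) (s, z) :=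
      (Continuous.prodMk_right s).continuousAt.eventually hdiff
    rw [EventuallyEq.fderiv_eq (hnear.mono fun z hz => deriv_eq_fderiv_uncurry_apply hz)]
    have hspace := (hfderiv.comp x (hasFDerivAt_prodMk_right s x)).clm_apply
      (hasFDerivAt_const ((1 : ℝ), (0 : E)) x)
    ext v
    simpa using (congrArg (· v) hspace.fderiv).trans
      (by simpa using (hL.isSymmSndFDerivAt (by simp)).eq (0, v) (1, 0))
  have hnear : ∀ᶠ τ in 𝓝 s, DifferentiableAt ℝ (uncurry L) (τ, x) :=
    (Continuous.prodMk_left x).continuousAt.eventually hdiff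
  have htime : HasDerivAt (fun τ => fderiv ℝ (uncurry L) (τ, x))
      (fderiv ℝ (fderiv ℝ (uncurry L)) (s, x) (1, 0)) s :=
    hfderiv.comp_hasDerivAt s ((hasDerivAt_id s).prodMk (hasDerivAt_const s x))
  rw [hmixed]
  refine HasDerivAt.congr_of_eventuallyEq ?_
    (hnear.mono fun τ hτ => fderiv_eq_fderiv_uncurry_comp_inr hτ)
  simpa using htime.clm_comp (hasDerivAt_const s (ContinuousLinearMap.inr ℝ ℝ E))

end MixedPartials

section Gradient

variable {E : Type*} [NormedAddCommGroup E] [InnerProductSpace ℝ E] [CompleteSpace E]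

theorem hasGradientAt_add {φ χ : E → ℝ} {u v x : E} (hφ : HasGradientAt φ u x)
    (hχ : HasGradientAt χ v x) : HasGradientAt (fun z => φ z + χ z) (u + v) x := by
  simpa only [hasGradientAt_iff_hasFDerivAt, map_add] using! hφ.hasFDerivAt.add hχ.hasFDerivAt

theorem hasGradientAt_const_mul {φ : E → ℝ} {u x : E} (c : ℝ) (hφ : HasGradientAt φ u x) :
    HasGradientAt (fun z => c * φ z) (c • u) x := by
  simpa [hasGradientAt_iff_hasFDerivAt] using hφ.hasFDerivAt.const_mul c

theorem hasGradientAt_inner {V W : E → E} {V' W' : E →L[ℝ] E} {x : E}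
    (hV : HasFDerivAt V V' x) (hW : HasFDerivAt W W' x) :
    HasGradientAt (fun z => ⟪V z, W z⟫) (V'.adjoint (W x) + W'.adjoint (V x)) x := by
  rw [hasGradientAt_iff_hasFDerivAt]
  refine (hV.inner ℝ hW).congr_fderiv ?_
  ext v
  simp [ContinuousLinearMap.adjoint_inner_left, real_inner_comm, add_comm]

theorem contDiffAt_gradient_uncurry {L : ℝ → E → ℝ} {s : ℝ} {x : E} {m n : WithTop ℕ∞}
    (hL : ContDiffAt ℝ n (uncurry L) (s, x)) (hmn : m + 1 ≤ n) :
    ContDiffAt ℝ m (fun q : ℝ × E => gradient (L q.1) q.2) (s, x) := by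
  have hfderiv : ContDiffAt ℝ m (fun q : ℝ × E => fderiv ℝ (L q.1) q.2) (s, x) :=
    ContDiffAt.fderiv (f := fun q : ℝ × E => L q.1)
      (hL.comp ((s, x), x) (by fun_prop : ContDiffAt ℝ n (fun r : (ℝ × E) × E => (r.1.1, r.2)) _))
      contDiffAt_snd hmn
  exact (toDual ℝ E).symm.toContinuousLinearEquiv.contDiff.contDiffAt.comp _ hfderiv

theorem contDiffAt_gradient {φ : E → ℝ} {x : E} {m n : WithTop ℕ∞} (hφ : ContDiffAt ℝ n φ x)
    (hmn : m + 1 ≤ n) : ContDiffAt ℝ m (gradient φ) x :=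
  (toDual ℝ E).symm.toContinuousLinearEquiv.contDiff.contDiffAt.comp x (hφ.fderiv_right hmn)

theorem isSelfAdjoint_fderiv_gradient {φ : E → ℝ} {x : E} (hφ : ContDiffAt ℝ 2 φ x) :
    IsSelfAdjoint (fderiv ℝ (gradient φ) x) := by
  have hinner (u v : E) : ⟪fderiv ℝ (gradient φ) x u, v⟫ = fderiv ℝ (fderiv ℝ φ) x u v := by
    let riesz : StrongDual ℝ E ≃L[ℝ] E := (toDual ℝ E).symm.toContinuousLinearEquiv
    have hcomp : fderiv ℝ (gradient φ) x = riesz.toContinuousLinearMap.comp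
        (fderiv ℝ (fderiv ℝ φ) x) := riesz.comp_fderiv
    rw [hcomp]
    exact toDual_symm_apply
  rw [ContinuousLinearMap.isSelfAdjoint_iff_isSymmetric]
  intro u v
  change ⟪fderiv ℝ (gradient φ) x u, v⟫ = ⟪u, fderiv ℝ (gradient φ) x v⟫
  rw [hinner, real_inner_comm, hinner]
  exact (hφ.isSymmSndFDerivAt (by simp)).eq u v

theorem hasGradientAt_inner_gradient_self {φ : E → ℝ} {x : E} (hφ : ContDiffAt ℝ 2 φ x) :
    HasGradientAt (fun z => ⟪gradient φ z, gradient φ z⟫)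
      ((2 : ℝ) • fderiv ℝ (gradient φ) x (gradient φ x)) x := by
  have hgrad := ((contDiffAt_gradient (m := 1) hφ (by norm_num)).differentiableAt
    (by simp)).hasFDerivAt
  simpa only [(isSelfAdjoint_fderiv_gradient hφ).adjoint_eq, two_smul] using
    hasGradientAt_inner hgrad hgrad

theorem hasGradientAt_inner_gradient_id {φ : E → ℝ} {x : E} (hφ : ContDiffAt ℝ 2 φ x) :
    HasGradientAt (fun z => ⟪gradient φ z, z⟫)
      (gradient φ x + fderiv ℝ (gradient φ) x x) x := by
  have hgrad := ((contDiffAt_gradient (m := 1) hφ (by norm_num)).differentiableAt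
    (by simp)).hasFDerivAt
  have h := hasGradientAt_inner hgrad (hasFDerivAt_id x)
  rwa [(isSelfAdjoint_fderiv_gradient hφ).adjoint_eq, ContinuousLinearMap.adjoint_id,
    ContinuousLinearMap.id_apply, add_comm] at h

theorem hasDerivAt_gradient_comp_curve {L : ℝ → E → ℝ} {s : ℝ} {y : ℝ → E} {y' : E}
    (hL : ContDiffAt ℝ 2 (uncurry L) (s, y s)) (hy : HasDerivAt y y' s) :
    HasDerivAt (fun τ => gradient (L τ) (y τ))
      (gradient (fun z => deriv (fun τ => L τ z) s) (y s) + fderiv ℝ (gradient (L s)) (y s) y')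
      s := by
  have hjoint := (contDiffAt_gradient_uncurry (m := 1) hL (by norm_num)).differentiableAt
    (by simp)
  have htime : HasDerivAt (fun τ => gradient (L τ) (y s))
      (gradient (fun z => deriv (fun τ => L τ z) s) (y s)) s :=
    (toDual ℝ E).symm.toContinuousLinearEquiv.hasFDerivAt.comp_hasDerivAt s
      (hasDerivAt_fderiv_of_contDiffAt_uncurry hL)
  have hpartial₁ := deriv_eq_fderiv_uncurry_apply (L := fun τ z => gradient (L τ) z) hjoint
  have hpartial₂ := fderiv_eq_fderiv_uncurry_comp_inr (L := fun τ z => gradient (L τ) z) hjoint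
  refine (hjoint.hasFDerivAt.comp_hasDerivAt s ((hasDerivAt_id s).prodMk hy)).congr_deriv ?_
  rw [← htime.deriv, hpartial₁, hpartial₂, ContinuousLinearMap.comp_apply,
    ContinuousLinearMap.inr_apply, ← map_add, Prod.mk_add_mk, add_zero, zero_add]
  rfl

end Gradient

section Laplacian

variable {D : ℕ} {φ q : EuclideanSpace ℝ (Fin D) → ℝ} {x : EuclideanSpace ℝ (Fin D)}

theorem divg_smul {V : EuclideanSpace ℝ (Fin D) → EuclideanSpace ℝ (Fin D)}
    (hq : DifferentiableAt ℝ q x) (hV : DifferentiableAt ℝ V x) :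
    divg (fun z => q z • V z) x = q x * divg V x + ⟪gradient q x, V x⟫ := by
  have hbasis : fderiv ℝ q x (V x) = ∑ i, V x i * fderiv ℝ q x (EuclideanSpace.single i 1) := by
    conv_lhs => rw [← (EuclideanSpace.basisFun (Fin D) ℝ).sum_repr (V x)]
    simp
  rw [inner_gradient_left, hbasis, divg, fderiv_fun_smul hq hV]
  simp [divg, Finset.sum_add_distrib, Finset.mul_sum, mul_comm]

theorem divg_const_smul_id (c : ℝ) (x : EuclideanSpace ℝ (Fin D)) :
    divg (fun z => c • z) x = c * D := by
  rw [divg, fderiv_fun_const_smul differentiableAt_fun_id, fderiv_fun_id]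
  simp [mul_comm]

theorem contDiffAt_lap {m n : WithTop ℕ∞} (hφ : ContDiffAt ℝ n φ x) (hmn : m + 1 + 1 ≤ n) :
    ContDiffAt ℝ m (lap φ) x := by
  have hhess : ContDiffAt ℝ m (fderiv ℝ (gradient φ)) x :=
    (contDiffAt_gradient hφ hmn).fderiv_right le_rfl
  unfold lap divg
  exact ContDiffAt.sum fun i _ =>
    (contDiffAt_piLp 2).1 (hhess.clm_apply contDiffAt_const) i

theorem gradient_eq_smul_gradient_log (hq : DifferentiableAt ℝ q x) (hx : q x ≠ 0) :
    gradient q x = q x • gradient (fun z => Real.log (q z)) x := by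
  refine ext_inner_right ℝ fun v => ?_
  rw [real_inner_smul_left, inner_gradient_left, inner_gradient_left, fderiv.log hq hx]
  simp [hx]

theorem lap_eq_mul_lap_log (hq : ContDiffAt ℝ 2 q x) (hx : q x ≠ 0) :
    lap q x = q x * (lap (fun z => Real.log (q z)) x +
      ⟪gradient (fun z => Real.log (q z)) x, gradient (fun z => Real.log (q z)) x⟫) := by
  have hdiff : DifferentiableAt ℝ q x := hq.differentiableAt (by simp)
  have hscore : DifferentiableAt ℝ (gradient fun z => Real.log (q z)) x :=
    (contDiffAt_gradient (m := 1) (hq.log hx) (by norm_num)).differentiableAt (by simp)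
  have hnear : gradient q =ᶠ[𝓝 x] fun z => q z • gradient (fun w => Real.log (q w)) z := by
    filter_upwards [hq.eventually (by simp), hq.continuousAt.eventually_ne hx] with z hz hz0
    exact gradient_eq_smul_gradient_log (hz.differentiableAt (by simp)) hz0
  calc lap q x = divg (fun z => q z • gradient (fun w => Real.log (q w)) z) x := by
        rw [lap, divg, divg, hnear.fderiv_eq]
    _ = _ := by
        rw [divg_smul hdiff hscore, gradient_eq_smul_gradient_log hdiff hx, real_inner_smul_left,
          lap, mul_add]

/-- The right-hand side of the evolution equation `∂ₛ φ = logFokkerPlanck c k φ` of the log-density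
`φ = log q` when `q` solves the Fokker–Planck equation `∂ₛ q = -div (c x q) + k Δ q` on `ℝ^D`. -/
noncomputable def logFokkerPlanck (c k : ℝ) (φ : EuclideanSpace ℝ (Fin D) → ℝ)
    (x : EuclideanSpace ℝ (Fin D)) : ℝ :=
  -c * (D + ⟪gradient φ x, x⟫) + k * (lap φ x + ⟪gradient φ x, gradient φ x⟫)

theorem linear_fokkerPlanck_div_eq_logFokkerPlanck (hq : ContDiffAt ℝ 2 q x) (hx : q x ≠ 0)
    (c k : ℝ) :
    (-divg (fun z => q z • c • z) x + k * lap q x) / q x =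
      logFokkerPlanck c k (fun z => Real.log (q z)) x := by
  have hdiff : DifferentiableAt ℝ q x := hq.differentiableAt (by simp)
  rw [logFokkerPlanck, divg_smul hdiff (by fun_prop), divg_const_smul_id,
    lap_eq_mul_lap_log hq hx, gradient_eq_smul_gradient_log hdiff hx, real_inner_smul_left,
    real_inner_smul_right]
  field_simp

theorem hasGradientAt_logFokkerPlanck (hφ : ContDiffAt ℝ 3 φ x) (c k : ℝ) :
    HasGradientAt (logFokkerPlanck c k φ)
      (-c • (gradient φ x + fderiv ℝ (gradient φ) x x) +
        k • (gradient (lap φ) x + (2 : ℝ) • fderiv ℝ (gradient φ) x (gradient φ x))) x := by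
  have hφ₂ : ContDiffAt ℝ 2 φ x := hφ.of_le (by norm_num)
  have hlap : DifferentiableAt ℝ (lap φ) x :=
    (contDiffAt_lap (m := 1) hφ (by norm_num)).differentiableAt (by simp)
  have hdrift := hasGradientAt_add (hasGradientAt_const x (D : ℝ))
    (hasGradientAt_inner_gradient_id hφ₂)
  have hdiffusion := hasGradientAt_add hlap.hasGradientAt (hasGradientAt_inner_gradient_self hφ₂)
  rw [zero_add] at hdrift
  exact hasGradientAt_add (hasGradientAt_const_mul (-c) hdrift)
    (hasGradientAt_const_mul k hdiffusion)

theorem gradient_deriv_log_of_linear_fokkerPlanck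
    {p : ℝ → EuclideanSpace ℝ (Fin D) → ℝ} {s c k : ℝ}
    (hp : ContDiffAt ℝ 3 (uncurry p) (s, x)) (hx : p s x ≠ 0)
    (hFP : ∀ᶠ z in 𝓝 x, deriv (fun τ => p τ z) s =
      -divg (fun w => p s w • c • w) z + k * lap (p s) z) :
    gradient (fun z => deriv (fun τ => Real.log (p τ z)) s) x =
      -c • (gradient (fun z => Real.log (p s z)) x +
          fderiv ℝ (gradient fun z => Real.log (p s z)) x x) +
        k • (gradient (lap fun z => Real.log (p s z)) x + (2 : ℝ) •
          fderiv ℝ (gradient fun z => Real.log (p s z)) x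
            (gradient (fun z => Real.log (p s z)) x)) := by
  have hslice : ContDiffAt ℝ 3 (p s) x := hp.comp x (contDiffAt_const.prodMk contDiffAt_id)
  have hjoint : ∀ᶠ z in 𝓝 x, ContDiffAt ℝ 3 (uncurry p) (s, z) :=
    (Continuous.prodMk_right s).continuousAt.eventually (hp.eventually (by simp))
  have hlogFP : (fun z => deriv (fun τ => Real.log (p τ z)) s) =ᶠ[𝓝 x]
      logFokkerPlanck c k fun z => Real.log (p s z) := by
    filter_upwards [hFP, hjoint, hslice.eventually (by simp),
      hslice.continuousAt.eventually_ne hx] with z hFPz hpz hslicez hz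
    have htime : ContDiffAt ℝ 3 (fun τ => p τ z) s :=
      hpz.comp s (contDiffAt_id.prodMk contDiffAt_const)
    rw [deriv.log (htime.differentiableAt (by simp)) hz, hFPz,
      linear_fokkerPlanck_div_eq_logFokkerPlanck (hslicez.of_le (by norm_num)) hz]
  rw [hlogFP.gradient_eq]
  exact (hasGradientAt_logFokkerPlanck (hslice.log hx) c k).gradient

end Laplacian

section NoiseSchedule

/-- The log signal-to-noise ratio `λ` of the noise schedule `(α, σ)`. -/
noncomputable def logSNR (α σ : ℝ → ℝ) (u : ℝ) : ℝ := Real.log (α u ^ 2 / σ u ^ 2)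

/-- The drift coefficient `f` of the forward diffusion with signal scale `α`. -/
noncomputable def driftCoeff (α : ℝ → ℝ) (u : ℝ) : ℝ := deriv (fun v => Real.log (α v)) u

/-- The squared diffusion coefficient `g²` of the forward diffusion with noise schedule `(α, σ)`;
it is defined without a square root and need not be nonnegative. -/
noncomputable def sqDiffusionCoeff (α σ : ℝ → ℝ) (u : ℝ) : ℝ := -deriv (logSNR α σ) u * σ u ^ 2

/-- The scale `f̃(s)` of the transition kernel `p(x_t | y_s) = N(f̃(s) y_s, g̃²(s) Id)`. -/
noncomputable def transitionScale (α : ℝ → ℝ) (t s : ℝ) : ℝ := α t / α s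

/-- The variance `g̃²(s)` of the transition kernel `p(x_t | y_s) = N(f̃(s) y_s, g̃²(s) Id)`. -/
noncomputable def transitionVar (α σ : ℝ → ℝ) (t s : ℝ) : ℝ :=
  σ t ^ 2 - transitionScale α t s ^ 2 * σ s ^ 2

/-- The precision `ψ(s)` of the transition kernel `p(x_t | y_s)` as a likelihood for `y_s`: minus
its log-Hessian in `y_s` is `ψ(s) Id`. -/
noncomputable def transitionPrecision (α σ : ℝ → ℝ) (t s : ℝ) : ℝ :=
  transitionScale α t s ^ 2 / transitionVar α σ t s

/-- The score `∇_y log p(x_t | y)` of the transition kernel from time `s` to time `t`, as a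
likelihood for the state `y` at time `s`. -/
noncomputable def transitionScore {E : Type*} [AddCommGroup E] [Module ℝ E] (α σ : ℝ → ℝ)
    (t : ℝ) (xt : E) (s : ℝ) (y : E) : E :=
  (transitionScale α t s / transitionVar α σ t s) • (xt - transitionScale α t s • y)

variable {α σ : ℝ → ℝ} {s : ℝ}

theorem driftCoeff_eq_deriv_div (hα : DifferentiableAt ℝ α s) (hαs : α s ≠ 0) :
    driftCoeff α s = deriv α s / α s :=
  deriv.log hα hαs

theorem deriv_logSNR (hα : DifferentiableAt ℝ α s) (hσ : DifferentiableAt ℝ σ s)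
    (hαs : α s ≠ 0) (hσs : σ s ≠ 0) :
    deriv (logSNR α σ) s = 2 * (deriv α s / α s - deriv σ s / σ s) := by
  have hratio := ((hα.hasDerivAt.pow 2).div (hσ.hasDerivAt.pow 2) (pow_ne_zero 2 hσs)).log
    (div_ne_zero (pow_ne_zero 2 hαs) (pow_ne_zero 2 hσs))
  refine Eq.trans hratio.deriv ?_
  simp only [Pi.pow_apply, Pi.div_apply, Nat.cast_ofNat, Nat.add_one_sub_one, pow_one]
  field_simp

theorem hasDerivAt_transitionScale (hα : DifferentiableAt ℝ α s) (hαs : α s ≠ 0) (t : ℝ) :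
    HasDerivAt (transitionScale α t) (-driftCoeff α s * transitionScale α t s) s := by
  refine ((hasDerivAt_const s (α t)).div hα.hasDerivAt hαs).congr_deriv ?_
  rw [driftCoeff_eq_deriv_div hα hαs, transitionScale]
  field_simp
  ring

theorem hasDerivAt_transitionVar (hα : DifferentiableAt ℝ α s) (hσ : DifferentiableAt ℝ σ s)
    (hαs : α s ≠ 0) (hσs : σ s ≠ 0) (t : ℝ) :
    HasDerivAt (transitionVar α σ t) (-transitionScale α t s ^ 2 * sqDiffusionCoeff α σ s) s := by
  have h := (((hasDerivAt_transitionScale hα hαs t).pow 2).mul (hσ.hasDerivAt.pow 2)).const_sub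
    (σ t ^ 2)
  refine h.congr_deriv ?_
  rw [sqDiffusionCoeff, deriv_logSNR hα hσ hαs hσs, driftCoeff_eq_deriv_div hα hαs]
  simp only [Pi.pow_apply, Nat.cast_ofNat, Nat.add_one_sub_one, pow_one]
  field_simp
  ring

theorem hasDerivAt_transitionScore {E : Type*} [NormedAddCommGroup E] [NormedSpace ℝ E]
    {y : ℝ → E} {y' : E} {t : ℝ} (hα : DifferentiableAt ℝ α s) (hσ : DifferentiableAt ℝ σ s)
    (hαs : α s ≠ 0) (hσs : σ s ≠ 0) (hvar : transitionVar α σ t s ≠ 0)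
    (hy : HasDerivAt y y' s) (xt : E) :
    HasDerivAt (fun τ => transitionScore α σ t xt τ (y τ))
      ((transitionPrecision α σ t s * sqDiffusionCoeff α σ s - driftCoeff α s) •
          transitionScore α σ t xt s (y s) -
        transitionPrecision α σ t s • (y' - driftCoeff α s • y s)) s := by
  have hscale := hasDerivAt_transitionScale hα hαs t
  have hvar' := hasDerivAt_transitionVar hα hσ hαs hσs t
  refine ((hscale.div hvar' hvar).smul ((hscale.smul hy).const_sub xt)).congr_deriv ?_
  simp only [Pi.div_apply, Pi.smul_apply', transitionScore, transitionPrecision]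
  match_scalars <;> field_simp <;> ring

end NoiseSchedule

theorem mode_tracking_general_general {D : ℕ} {α σ : ℝ → ℝ}
    {p : ℝ → EuclideanSpace ℝ (Fin D) → ℝ} {s t : ℝ} {xt y' : EuclideanSpace ℝ (Fin D)}
    {y : ℝ → EuclideanSpace ℝ (Fin D)}
    (hα : DifferentiableAt ℝ α s) (hσ : DifferentiableAt ℝ σ s) (hαpos : 0 < α s)
    (hσpos : 0 < σ s) (hp : ContDiffAt ℝ 3 (uncurry p) (s, y s)) (hppos : 0 < p s (y s))
    (hFP : ∀ᶠ x in 𝓝 (y s), deriv (fun τ => p τ x) s =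
      -divg (fun z => p s z • driftCoeff α s • z) x + 1 / 2 * sqDiffusionCoeff α σ s * lap (p s) x)
    (hvar : transitionVar α σ t s ≠ 0) (hy : HasDerivAt y y' s)
    (hcrit : ∀ᶠ τ in 𝓝 s, gradient (fun z => Real.log (p τ z)) (y τ) +
      transitionScore α σ t xt τ (y τ) = 0) :
    fderiv ℝ (gradient fun z => Real.log (p s z)) (y s) (y' - driftCoeff α s • y s +
        sqDiffusionCoeff α σ s • gradient (fun z => Real.log (p s z)) (y s)) -
      transitionPrecision α σ t s • (y' - driftCoeff α s • y s +
        sqDiffusionCoeff α σ s • gradient (fun z => Real.log (p s z)) (y s)) =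
    -((1 / 2 * sqDiffusionCoeff α σ s) • gradient (lap fun z => Real.log (p s z)) (y s)) := by
  have hlog : ContDiffAt ℝ 2 (uncurry fun τ z => Real.log (p τ z)) (s, y s) :=
    (hp.log hppos.ne').of_le (by norm_num)
  have hderiv := (hasDerivAt_gradient_comp_curve hlog hy).add
    (hasDerivAt_transitionScore hα hσ hαpos.ne' hσpos.ne' hvar hy xt)
  have hzero := hderiv.unique ((hasDerivAt_const s 0).congr_of_eventuallyEq hcrit)
  rw [gradient_deriv_log_of_linear_fokkerPlanck hp hppos.ne' hFP,
    eq_neg_of_add_eq_zero_right hcrit.self_of_nhds] at hzero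
  simp only [map_add, map_sub, map_smul]
  linear_combination (norm := module) hzero

/-- Mode-tracking equation, general form (Theorem 4 without the
invertibility assumption on `A`). -/
theorem mode_tracking_general {D : ℕ} (hD : 0 < D)
    (α σ : ℝ → ℝ) (hα : ContDiff ℝ (⊤ : ℕ∞) α) (hσ : ContDiff ℝ (⊤ : ℕ∞) σ)
    (hαpos : ∀ t, 0 < α t) (hσpos : ∀ t, 0 < σ t)
    (lam f gsq : ℝ → ℝ)
    (hlam : ∀ t, lam t = Real.log (α t ^ 2 / σ t ^ 2))
    (hf : ∀ t, f t = deriv (fun u => Real.log (α u)) t)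
    (hgsq : ∀ t, gsq t = -(deriv lam t) * σ t ^ 2)
    (p : ℝ → EuclideanSpace ℝ (Fin D) → ℝ)
    (hp : ContDiff ℝ (⊤ : ℕ∞) (fun q : ℝ × EuclideanSpace ℝ (Fin D) => p q.1 q.2))
    (hppos : ∀ t x, 0 < p t x)
    (hFP : ∀ t x, deriv (fun τ => p τ x) t
      = - divg (fun y => p t y • (f t • y)) x + (1 / 2) * gsq t * lap (p t) x)
    (t : ℝ) (ht : 0 < t) (xt : EuclideanSpace ℝ (Fin D))
    (ft gt2 ψ : ℝ → ℝ)
    (hft : ∀ s, ft s = α t / α s)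
    (hgt2 : ∀ s, gt2 s = σ t ^ 2 - ft s ^ 2 * σ s ^ 2)
    (hψ : ∀ s, ψ s = ft s ^ 2 / gt2 s)
    (hgt2pos : ∀ s ∈ Set.Ioo (0 : ℝ) t, 0 < gt2 s)
    (y y' : ℝ → EuclideanSpace ℝ (Fin D))
    (hy : ∀ s ∈ Set.Ioo (0 : ℝ) t, HasDerivAt y (y' s) s)
    (hcrit : ∀ s ∈ Set.Ioo (0 : ℝ) t,
      gradient (fun z => Real.log (p s z)) (y s)
        + (ft s / gt2 s) • (xt - ft s • y s) = 0) :
    ∀ s ∈ Set.Ioo (0 : ℝ) t,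
      (fderiv ℝ (fun z => gradient (fun w => Real.log (p s w)) z) (y s))
          (y' s - f s • y s + gsq s • gradient (fun z => Real.log (p s z)) (y s))
        - ψ s • (y' s - f s • y s + gsq s • gradient (fun z => Real.log (p s z)) (y s))
      = -(((1 / 2) * gsq s) • gradient (fun z => lap (fun w => Real.log (p s w)) z) (y s)) := by
  obtain rfl : lam = logSNR α σ := funext hlam
  obtain rfl : f = driftCoeff α := funext hf
  obtain rfl : gsq = sqDiffusionCoeff α σ := funext hgsq
  obtain rfl : ft = transitionScale α t := funext hft
  obtain rfl : gt2 = transitionVar α σ t := funext hgt2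
  obtain rfl : ψ = transitionPrecision α σ t := funext hψ
  have hp₃ : ContDiff ℝ 3 (uncurry p) := hp.of_le (by norm_cast)
  exact fun s hs => mode_tracking_general_general (hα.differentiable (by simp) s)
    (hσ.differentiable (by simp) s) (hαpos s) (hσpos s) hp₃.contDiffAt (hppos s (y s))
    (.of_forall (hFP s)) (hgt2pos s hs).ne' (hy s hs)
    (mem_of_superset (Ioo_mem_nhds hs.1 hs.2) hcrit)
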